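/- Three-way concordance under model M2: for any MTP g whose induced kernels q̃^g satisfy positivity B1.2, under consistency and condition B1.3 the counterfactual kernels q^{g,cf}_t coincide with q̃^g_t on all histories of positive probability, and consequently E[Y^g] = E[Y^{g,cf}] = E[Y^{q̃^g}] = Ψ_{q̃^g}(P); that is, the MTP mean γ_MTP, its g1-stochastic analogue γ_MTP-SI^{g1}, and the stochastic-regime mean γ_MTP-SI are all equal and all identified by the same g-formula. -/

import Mathlib

open Classical

noncomputable section

/-- Probability of the event `S` under the probability mass function `P`
on a finite sample space. -/
def pr {Ω : Type} [Fintype Ω] (P : Ω → ℝ) (S : Ω → Prop) : ℝ :=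
  ∑ ω, if S ω then P ω else 0

/-- Conditional probability of `S` given `T`, with the convention that it is `0`
when the conditioning event is null (in Lean, `x / 0 = 0`). -/
def cpr {Ω : Type} [Fintype Ω] (P : Ω → ℝ) (S T : Ω → Prop) : ℝ :=
  pr P (fun ω => S ω ∧ T ω) / pr P T

/-- Expectation of `X` under `P`. -/
def expec {Ω : Type} [Fintype Ω] (P : Ω → ℝ) (X : Ω → ℝ) : ℝ :=
  ∑ ω, X ω * P ω

/-- Conditional expectation of `X` given the event `T`, with the convention that
it is `0` when the conditioning event is null. -/
def cexp {Ω : Type} [Fintype Ω] (P : Ω → ℝ) (X : Ω → ℝ) (T : Ω → Prop) : ℝ :=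
  (∑ ω, if T ω then X ω * P ω else 0) / pr P T

/-- Observed history event `{L̄_t = l̄_t, Ā_{t-1} = ā_{t-1}}` (covariates through
time `t`, treatments strictly before `t`). -/
def histEvent {Ω Lt : Type} {K : ℕ} (L : Fin K → Ω → Lt) (A : Fin K → Ω → Fin 2)
    (t : Fin K) (lbar : Fin K → Lt) (abar : Fin K → Fin 2) : Ω → Prop :=
  fun ω => (∀ s, s ≤ t → L s ω = lbar s) ∧ (∀ s, s < t → A s ω = abar s)

/-- The g-formula `Ψ_q̃(P)` for an intervention-kernel collection `q`:
`Σ_{y,l̄_K,ā_K} y · p(y|l̄_K,ā_K) · ∏_j p(l_j|l̄_{j-1},ā_{j-1}) · ∏_t q̃_t(a_t|l̄_t,ā_{t-1})`. -/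
def gform {Ω Lt : Type} [Fintype Ω] [Fintype Lt] {K : ℕ}
    (P : Ω → ℝ) (L : Fin K → Ω → Lt) (A : Fin K → Ω → Fin 2) (Y : Ω → ℝ)
    (q : Fin K → (Fin K → Lt) → (Fin K → Fin 2) → Fin 2 → ℝ) : ℝ :=
  ∑ lbar : Fin K → Lt, ∑ abar : Fin K → Fin 2,
    cexp P Y (fun ω => (∀ s, L s ω = lbar s) ∧ (∀ s, A s ω = abar s))
      * (∏ j, cpr P (fun ω => L j ω = lbar j)
          (fun ω => (∀ s, s < j → L s ω = lbar s) ∧ (∀ s, s < j → A s ω = abar s)))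
      * (∏ t, q t lbar abar (abar t))

/-- `q` is a collection of intervention kernels: each `q t lbar abar` is a
probability mass function on `{0,1}`. -/
def IsKernel {Lt : Type} {K : ℕ}
    (q : Fin K → (Fin K → Lt) → (Fin K → Fin 2) → Fin 2 → ℝ) : Prop :=
  ∀ (t : Fin K) (lbar : Fin K → Lt) (abar : Fin K → Fin 2),
    (∀ a, 0 ≤ q t lbar abar a) ∧ (∑ a, q t lbar abar a) = 1

/-- The kernel at time `t` depends only on the history values `(l̄_t, ā_{t-1})`. -/
def KernelPrefixDep {Lt : Type} {K : ℕ}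
    (q : Fin K → (Fin K → Lt) → (Fin K → Fin 2) → Fin 2 → ℝ) : Prop :=
  ∀ (t : Fin K) (lbar lbar' : Fin K → Lt) (abar abar' : Fin K → Fin 2),
    (∀ s, s ≤ t → lbar s = lbar' s) → (∀ s, s < t → abar s = abar' s) →
    q t lbar abar = q t lbar' abar'

/-- Positivity condition B1.2. -/
def B12 {Ω Lt : Type} [Fintype Ω] {K : ℕ} (P : Ω → ℝ)
    (L : Fin K → Ω → Lt) (A : Fin K → Ω → Fin 2)
    (q : Fin K → (Fin K → Lt) → (Fin K → Fin 2) → Fin 2 → ℝ) : Prop :=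
  ∀ (t : Fin K) (lbar : Fin K → Lt) (abar : Fin K → Fin 2),
    0 < pr P (histEvent L A t lbar abar) →
    ∀ a : Fin 2, 0 < q t lbar abar a →
      0 < cpr P (fun ω => A t ω = a) (histEvent L A t lbar abar)

/-- Counterfactual covariates and natural treatment values at time `t` depend on the
static regime `ā` only through `(ā_1, ..., ā_{t-1})`. -/
def CfPrefixDep {Ω Lt : Type} {K : ℕ}
    (Lc : (Fin K → Fin 2) → Fin K → Ω → Lt)
    (Ac : (Fin K → Fin 2) → Fin K → Ω → Fin 2) : Prop :=
  ∀ (abar abar' : Fin K → Fin 2) (t : Fin K),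
    (∀ s, s < t → abar s = abar' s) → Lc abar t = Lc abar' t ∧ Ac abar t = Ac abar' t

/-- Consistency of the counterfactual process with the observed data. -/
def CfConsistent {Ω Lt : Type} {K : ℕ}
    (L : Fin K → Ω → Lt) (A : Fin K → Ω → Fin 2) (Y : Ω → ℝ)
    (Lc : (Fin K → Fin 2) → Fin K → Ω → Lt)
    (Ac : (Fin K → Fin 2) → Fin K → Ω → Fin 2)
    (Yc : (Fin K → Fin 2) → Ω → ℝ) : Prop :=
  (∀ (abar : Fin K → Fin 2) (t : Fin K) (ω : Ω),
    (∀ s, s < t → A s ω = abar s) → Lc abar t ω = L t ω ∧ Ac abar t ω = A t ω) ∧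
  (∀ (abar : Fin K → Fin 2) (ω : Ω), (∀ s, A s ω = abar s) → Yc abar ω = Y ω)

/-- Counterfactual history event `{L̄_m(ā) = l̄_m, Ā_{m-1}(ā) = ā_{m-1}}`. -/
def cfHist {Ω Lt : Type} {K : ℕ}
    (Lc : (Fin K → Fin 2) → Fin K → Ω → Lt)
    (Ac : (Fin K → Fin 2) → Fin K → Ω → Fin 2)
    (abar : Fin K → Fin 2) (m : Fin K) (lbar : Fin K → Lt) : Ω → Prop :=
  fun ω => (∀ s, s ≤ m → Lc abar s ω = lbar s) ∧ (∀ s, s < m → Ac abar s ω = abar s)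

/-- Sequential exchangeability condition B1.4: for every `m` and `ā`, the vector
`(L_{m+1}(ā), ..., L_K(ā), Y(ā))` is conditionally independent of the indicator
`1{A_m(ā) = ā_m}` given each positive-probability counterfactual history. -/
def B14 {Ω Lt : Type} [Fintype Ω] {K : ℕ} (P : Ω → ℝ)
    (Lc : (Fin K → Fin 2) → Fin K → Ω → Lt)
    (Ac : (Fin K → Fin 2) → Fin K → Ω → Fin 2)
    (Yc : (Fin K → Fin 2) → Ω → ℝ) : Prop :=
  ∀ (m : Fin K) (abar : Fin K → Fin 2) (lbar : Fin K → Lt),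
    0 < pr P (cfHist Lc Ac abar m lbar) →
    ∀ (lv : Fin K → Lt) (y : ℝ),
      cpr P (fun ω => ((∀ s, m < s → Lc abar s ω = lv s) ∧ Yc abar ω = y)
            ∧ Ac abar m ω = abar m)
          (cfHist Lc Ac abar m lbar)
        = cpr P (fun ω => (∀ s, m < s → Lc abar s ω = lv s) ∧ Yc abar ω = y)
              (cfHist Lc Ac abar m lbar)
          * cpr P (fun ω => Ac abar m ω = abar m) (cfHist Lc Ac abar m lbar)

/-- Sequential exchangeability condition B1.3: as B1.4, but with the future vector
enlarged to `(L_{m+1}(ā), ..., L_K(ā), A_{m+1}(ā), ..., A_K(ā), Y(ā))`. -/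
def B13 {Ω Lt : Type} [Fintype Ω] {K : ℕ} (P : Ω → ℝ)
    (Lc : (Fin K → Fin 2) → Fin K → Ω → Lt)
    (Ac : (Fin K → Fin 2) → Fin K → Ω → Fin 2)
    (Yc : (Fin K → Fin 2) → Ω → ℝ) : Prop :=
  ∀ (m : Fin K) (abar : Fin K → Fin 2) (lbar : Fin K → Lt),
    0 < pr P (cfHist Lc Ac abar m lbar) →
    ∀ (lv : Fin K → Lt) (av : Fin K → Fin 2) (y : ℝ),
      cpr P (fun ω => ((∀ s, m < s → Lc abar s ω = lv s)
              ∧ (∀ s, m < s → Ac abar s ω = av s) ∧ Yc abar ω = y)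
            ∧ Ac abar m ω = abar m)
          (cfHist Lc Ac abar m lbar)
        = cpr P (fun ω => (∀ s, m < s → Lc abar s ω = lv s)
              ∧ (∀ s, m < s → Ac abar s ω = av s) ∧ Yc abar ω = y)
              (cfHist Lc Ac abar m lbar)
          * cpr P (fun ω => Ac abar m ω = abar m) (cfHist Lc Ac abar m lbar)

/-- Mean outcome under the stochastic regime with intervention kernels `q`:
`E[Y^q̃] = Σ_{ā} E[ Y(ā) · ∏_t q̃_t(ā_t | L̄_t(ā), ā_{t-1}) ]`. -/
def stochMean {Ω Lt : Type} [Fintype Ω] {K : ℕ} (P : Ω → ℝ)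
    (Lc : (Fin K → Fin 2) → Fin K → Ω → Lt)
    (Yc : (Fin K → Fin 2) → Ω → ℝ)
    (q : Fin K → (Fin K → Lt) → (Fin K → Fin 2) → Fin 2 → ℝ) : ℝ :=
  ∑ abar : Fin K → Fin 2,
    expec P (fun ω => Yc abar ω * ∏ t, q t (fun s => Lc abar s ω) abar (abar t))

/-- The decision functions of a modified treatment policy depend only on
`(a, l̄_t, ā_{t-1})`. -/
def PolPrefixDep {Lt : Type} {K : ℕ}
    (g : Fin K → Fin 2 → (Fin K → Lt) → (Fin K → Fin 2) → Fin 2) : Prop :=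
  ∀ (t : Fin K) (a : Fin 2) (lbar lbar' : Fin K → Lt) (abar abar' : Fin K → Fin 2),
    (∀ s, s ≤ t → lbar s = lbar' s) → (∀ s, s < t → abar s = abar' s) →
    g t a lbar abar = g t a lbar' abar'

/-- `Ap` is the recursively defined assigned-treatment process `Ā⁺` of the MTP `g`:
`A⁺_t = g_t(A_t(Ā⁺_{t-1}), L̄_t(Ā⁺_{t-1}), Ā⁺_{t-1})`. -/
def IsMTPProcess {Ω Lt : Type} {K : ℕ}
    (Lc : (Fin K → Fin 2) → Fin K → Ω → Lt)
    (Ac : (Fin K → Fin 2) → Fin K → Ω → Fin 2)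
    (g : Fin K → Fin 2 → (Fin K → Lt) → (Fin K → Fin 2) → Fin 2)
    (Ap : Fin K → Ω → Fin 2) : Prop :=
  ∀ (t : Fin K) (ω : Ω),
    Ap t ω = g t (Ac (fun s => Ap s ω) t ω)
        (fun s => Lc (fun s' => Ap s' ω) s ω) (fun s => Ap s ω)

/-- Induced intervention kernels `q̃^g` of an MTP:
`q̃^g_t(a⁺ | l̄_t, ā_{t-1}) = Σ_{a : g_t(a,l̄_t,ā_{t-1}) = a⁺} P(A_t = a | L̄_t = l̄_t, Ā_{t-1} = ā_{t-1})`. -/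
def qMTP {Ω Lt : Type} [Fintype Ω] {K : ℕ} (P : Ω → ℝ)
    (L : Fin K → Ω → Lt) (A : Fin K → Ω → Fin 2)
    (g : Fin K → Fin 2 → (Fin K → Lt) → (Fin K → Fin 2) → Fin 2) :
    Fin K → (Fin K → Lt) → (Fin K → Fin 2) → Fin 2 → ℝ :=
  fun t lbar abar aplus =>
    ∑ a : Fin 2, if g t a lbar abar = aplus then
      cpr P (fun ω => A t ω = a) (histEvent L A t lbar abar) else 0

/-- Counterfactual (g1-stochastic) kernels `q^{g,cf}` of an MTP:
`q^{g,cf}_t(a⁺ | l̄_t, ā⁺_{t-1}) = P( g_t(A_t(Ā⁺_{t-1}), l̄_t, ā⁺_{t-1}) = a⁺ |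
  L̄_t(Ā⁺_{t-1}) = l̄_t, Ā⁺_{t-1} = ā⁺_{t-1} )`. -/
def qMTPcf {Ω Lt : Type} [Fintype Ω] {K : ℕ} (P : Ω → ℝ)
    (Lc : (Fin K → Fin 2) → Fin K → Ω → Lt)
    (Ac : (Fin K → Fin 2) → Fin K → Ω → Fin 2)
    (g : Fin K → Fin 2 → (Fin K → Lt) → (Fin K → Fin 2) → Fin 2)
    (Ap : Fin K → Ω → Fin 2) :
    Fin K → (Fin K → Lt) → (Fin K → Fin 2) → Fin 2 → ℝ :=
  fun t lbar abar aplus =>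
    cpr P (fun ω => g t (Ac (fun s => Ap s ω) t ω) lbar abar = aplus)
      (fun ω => (∀ s, s ≤ t → Lc (fun s' => Ap s' ω) s ω = lbar s) ∧
        (∀ s, s < t → Ap s ω = abar s))

/-!
Fix a path `(l̄, ā)`. By consistency the natural treatment value `A_t(ā)` is the observed `A_t` on
the observed history `H_t` of the path, and by B1.3 it is there independent of the counterfactual
future (both values of a binary treatment are covered, since an event and its complement are
independent of the same variables). Hence any weight `w_t(A_t(ā))` can be traded, one time point
after the other, for its conditional mean given `H_t`; positivity then allows `H_t` to be
shrunk to `H_t ∩ {A_t = ā_t}` at the price of dividing by the propensity. So the weighted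
expectation `E[F · ∏ w_t(A_t(ā)); L̄(ā) = l̄]` depends on the weights only through their conditional
means. The constant weights `q̃^g_t(ā_t | l̄_t, ā_{t-1})`, which produce the stochastic regime, and
the indicators `1{g_t(A_t(ā), l̄_t, ā_{t-1}) = ā_t}`, which produce the MTP, have the same
conditional means.
-/

section FiniteProbability

/-- The expectation `E[X; S]` of `X` restricted to the event `S`, i.e. the numerator of `cexp`. -/
def expecOn {Ω : Type} [Fintype Ω] (P X : Ω → ℝ) (S : Ω → Prop) : ℝ :=
  ∑ ω, if S ω then X ω * P ω else 0

variable {Ω : Type} [Fintype Ω] {P X X' : Ω → ℝ} {S S' T : Ω → Prop}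

lemma pr_congr (h : ∀ ω, S ω ↔ T ω) : pr P S = pr P T := by
  simp only [pr, h]

lemma cpr_congr (h : ∀ ω, T ω → (S ω ↔ S' ω)) : cpr P S T = cpr P S' T := by
  rw [cpr, cpr, pr_congr fun ω => and_congr_left (h ω)]

lemma expecOn_congr (hST : ∀ ω, S ω ↔ T ω) (hX : ∀ ω, S ω → X ω = X' ω) :
    expecOn P X S = expecOn P X' T := by
  refine Finset.sum_congr rfl fun ω _ => ?_
  simp only [← hST ω]
  exact if_ctx_congr Iff.rfl (fun h => by rw [hX ω h]) fun _ => rfl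

lemma expecOn_one (P : Ω → ℝ) (S : Ω → Prop) : expecOn P (fun _ => 1) S = pr P S := by
  simp only [expecOn, pr, one_mul]

lemma expecOn_eq_const_mul_pr {c : ℝ} (h : ∀ ω, S ω → X ω = c) :
    expecOn P X S = c * pr P S := by
  rw [expecOn_congr (fun _ => Iff.rfl) h, expecOn, pr, Finset.mul_sum]
  simp only [mul_ite, mul_zero]

lemma expecOn_mul_const (P X : Ω → ℝ) (S : Ω → Prop) (c : ℝ) :
    expecOn P (fun ω => X ω * c) S = c * expecOn P X S := by
  rw [expecOn, expecOn, Finset.mul_sum]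
  refine Finset.sum_congr rfl fun ω _ => ?_
  rw [mul_ite, mul_zero, mul_right_comm, mul_comm c]

lemma expecOn_mul_indicator (P X : Ω → ℝ) (S T : Ω → Prop) [DecidablePred T] :
    expecOn P (fun ω => X ω * if T ω then 1 else 0) S =
      expecOn P X (fun ω => T ω ∧ S ω) := by
  refine Finset.sum_congr rfl fun ω _ => ?_
  by_cases hT : T ω <;> simp [hT]

lemma expecOn_eq_sum_fiber {κ : Type*} (P X : Ω → ℝ) (S : Ω → Prop) (Z : Ω → κ) {s : Finset κ}
    (hs : ∀ ω, Z ω ∈ s) :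
    expecOn P X S = ∑ z ∈ s, expecOn P X (fun ω => Z ω = z ∧ S ω) := by
  simp only [expecOn]
  rw [Finset.sum_comm]
  refine Finset.sum_congr rfl fun ω _ => ?_
  rw [Finset.sum_eq_single_of_mem (Z ω) (hs ω)]
  · simp only [true_and]
  · exact fun z _ hz => if_neg fun h => hz h.1.symm

lemma expec_eq_sum_fiber {κ : Type*} (P X : Ω → ℝ) (Z : Ω → κ) {s : Finset κ}
    (hs : ∀ ω, Z ω ∈ s) :
    expec P X = ∑ z ∈ s, expecOn P X (fun ω => Z ω = z) := by
  have h := expecOn_eq_sum_fiber P X (fun _ => True) Z hs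
  simpa only [expecOn, expec, and_true, if_true] using h

lemma pr_nonneg (hP0 : ∀ ω, 0 ≤ P ω) (S : Ω → Prop) : 0 ≤ pr P S :=
  Finset.sum_nonneg fun ω _ => ite_nonneg (hP0 ω) le_rfl

lemma cpr_nonneg (hP0 : ∀ ω, 0 ≤ P ω) (S T : Ω → Prop) : 0 ≤ cpr P S T :=
  div_nonneg (pr_nonneg hP0 _) (pr_nonneg hP0 _)

lemma expecOn_eq_zero_of_imp (hP0 : ∀ ω, 0 ≤ P ω) (hT : pr P T = 0) (hST : ∀ ω, S ω → T ω)
    (X : Ω → ℝ) : expecOn P X S = 0 := by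
  have hnull : ∀ ω, T ω → P ω = 0 := fun ω hω => by
    simpa [hω] using (Finset.sum_eq_zero_iff_of_nonneg fun ω _ =>
      ite_nonneg (hP0 ω) le_rfl).1 hT ω (Finset.mem_univ ω)
  refine Finset.sum_eq_zero fun ω _ => ?_
  split_ifs with hω
  · rw [hnull ω (hST ω hω), mul_zero]
  · rfl

lemma cpr_mul_pr (hP0 : ∀ ω, 0 ≤ P ω) (S T : Ω → Prop) :
    cpr P S T * pr P T = pr P (fun ω => S ω ∧ T ω) := by
  refine div_mul_cancel_of_imp fun hT => ?_
  rw [← expecOn_one]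
  exact expecOn_eq_zero_of_imp hP0 hT (fun _ h => h.2) _

lemma cexp_mul_pr (hP0 : ∀ ω, 0 ≤ P ω) (X : Ω → ℝ) (T : Ω → Prop) :
    cexp P X T * pr P T = expecOn P X T :=
  div_mul_cancel_of_imp fun hT => expecOn_eq_zero_of_imp hP0 hT (fun _ h => h) X

lemma sum_cpr_eq_one {κ : Type*} [Fintype κ] (Z : Ω → κ) (hT : pr P T ≠ 0) :
    ∑ z, cpr P (fun ω => Z ω = z) T = 1 := by
  have h := expecOn_eq_sum_fiber P (fun _ => 1) T Z fun _ => Finset.mem_univ _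
  simp only [expecOn_one] at h
  simp only [cpr, ← Finset.sum_div]
  rw [← h, div_self hT]

lemma expecOn_and_of_condIndep {κ : Type*} (hP0 : ∀ ω, 0 ≤ P ω) {Z : Ω → κ} {B : Ω → Prop}
    (hindep : 0 < pr P S → ∀ ω₀, cpr P (fun ω => Z ω = Z ω₀ ∧ B ω) S =
      cpr P (fun ω => Z ω = Z ω₀) S * cpr P B S)
    {F : Ω → ℝ} (hF : F.FactorsThrough Z) :
    expecOn P F (fun ω => B ω ∧ S ω) = cpr P B S * expecOn P F S := by
  rcases (pr_nonneg hP0 S).eq_or_lt with hnull | hpos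
  · rw [expecOn_eq_zero_of_imp hP0 hnull.symm (fun _ h => h.2),
      expecOn_eq_zero_of_imp hP0 hnull.symm (fun _ h => h), mul_zero]
  have hmem : ∀ ω, Z ω ∈ Finset.univ.image Z := fun ω =>
    Finset.mem_image_of_mem Z (Finset.mem_univ ω)
  rw [expecOn_eq_sum_fiber P F _ Z hmem, expecOn_eq_sum_fiber P F S Z hmem, Finset.mul_sum]
  refine Finset.sum_congr rfl fun z hz => ?_
  obtain ⟨ω₀, -, rfl⟩ := Finset.mem_image.1 hz
  have hfactor : pr P (fun ω => Z ω = Z ω₀ ∧ B ω ∧ S ω) =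
      pr P (fun ω => Z ω = Z ω₀ ∧ S ω) * cpr P B S := by
    have h := congrArg (· * pr P S) (hindep hpos ω₀)
    simp only [mul_right_comm _ (cpr P B S), cpr_mul_pr hP0] at h
    simpa only [and_assoc] using h
  rw [expecOn_eq_const_mul_pr fun ω hω => hF hω.1, expecOn_eq_const_mul_pr fun ω hω => hF hω.1,
    hfactor]
  ring

lemma expecOn_fiber_of_expecOn_fiber (hP0 : ∀ ω, 0 ≤ P ω) {Z : Ω → Fin 2} {b : Fin 2}
    (hb : expecOn P X (fun ω => Z ω = b ∧ S ω) =
      cpr P (fun ω => Z ω = b) S * expecOn P X S) (a : Fin 2) :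
    expecOn P X (fun ω => Z ω = a ∧ S ω) = cpr P (fun ω => Z ω = a) S * expecOn P X S := by
  rcases eq_or_ne a b with rfl | hab
  · exact hb
  by_cases hS : pr P S = 0
  · rw [expecOn_eq_zero_of_imp hP0 hS (fun _ h => h.2),
      expecOn_eq_zero_of_imp hP0 hS (fun _ h => h), mul_zero]
  have huniv : (Finset.univ : Finset (Fin 2)) = {a, b} := by
    ext c
    simp only [Finset.mem_univ, Finset.mem_insert, Finset.mem_singleton, true_iff]
    omega
  have htotal := expecOn_eq_sum_fiber P X S Z fun _ => Finset.mem_univ _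
  have hone := sum_cpr_eq_one Z hS
  rw [huniv, Finset.sum_pair hab] at htotal hone
  linear_combination -htotal - expecOn P X S * hone - hb

lemma expecOn_mul_comp {κ : Type*} [Fintype κ] {Z : Ω → κ}
    (h : ∀ z, expecOn P X (fun ω => Z ω = z ∧ S ω) =
      cpr P (fun ω => Z ω = z) S * expecOn P X S) (v : κ → ℝ) :
    expecOn P (fun ω => X ω * v (Z ω)) S =
      (∑ z, v z * cpr P (fun ω => Z ω = z) S) * expecOn P X S := by
  rw [expecOn_eq_sum_fiber P _ S Z fun _ => Finset.mem_univ _, Finset.sum_mul]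
  refine Finset.sum_congr rfl fun z _ => ?_
  rw [expecOn_congr (X' := fun ω => X ω * v z) (fun _ => Iff.rfl) fun ω hω => by rw [hω.1],
    expecOn_mul_const, h, mul_assoc]

end FiniteProbability

section Prefixes

variable {K : ℕ}

/-- The sequences `x` and `y` agree at the first `n` time points. -/
def AgreeBefore {β : Type} (n : Fin (K + 1)) (x y : Fin K → β) : Prop :=
  ∀ s, s.castSucc < n → x s = y s

variable {β : Type} {x y : Fin K → β}

lemma agreeBefore_zero : AgreeBefore 0 x y :=
  fun s hs => absurd hs (Fin.not_lt_zero s.castSucc)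

lemma agreeBefore_castSucc {t : Fin K} :
    AgreeBefore t.castSucc x y ↔ ∀ s, s < t → x s = y s := by
  simp only [AgreeBefore, Fin.castSucc_lt_castSucc_iff]

lemma agreeBefore_succ {t : Fin K} :
    AgreeBefore t.succ x y ↔ ∀ s, s ≤ t → x s = y s := by
  simp only [AgreeBefore, Fin.castSucc_lt_succ_iff]

lemma agreeBefore_succ_iff_and {t : Fin K} :
    AgreeBefore t.succ x y ↔ x t = y t ∧ AgreeBefore t.castSucc x y := by
  simp only [agreeBefore_succ, agreeBefore_castSucc, le_iff_lt_or_eq, or_imp, forall_and,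
    forall_eq, and_comm]

lemma agreeBefore_last : AgreeBefore (Fin.last K) x y ↔ x = y := by
  simp only [AgreeBefore, Fin.castSucc_lt_last, forall_const, funext_iff]

lemma partialProd_last {M : Type*} [CommMonoid M] (f : Fin K → M) :
    Fin.partialProd f (Fin.last K) = ∏ s, f s := by
  rw [Fin.partialProd, Fin.val_last, List.take_of_length_le (by simp), List.prod_ofFn]

end Prefixes

section Counterfactuals

variable {Ω Lt : Type} {K : ℕ}

/-- The event `{L̄_n = l̄_n, Ā_n = ā_n}` that the first `n` observed covariates and treatments
follow the path `(l̄, ā)`. -/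
def obsPast (L : Fin K → Ω → Lt) (A : Fin K → Ω → Fin 2) (lbar : Fin K → Lt)
    (abar : Fin K → Fin 2) (n : Fin (K + 1)) : Ω → Prop :=
  fun ω => AgreeBefore n (L · ω) lbar ∧ AgreeBefore n (A · ω) abar

/-- The event that the first `n` counterfactual covariates `L_s(ā)` are those of `l̄`. -/
def cfCovariatePast (Lc : (Fin K → Fin 2) → Fin K → Ω → Lt) (lbar : Fin K → Lt)
    (abar : Fin K → Fin 2) (n : Fin (K + 1)) : Ω → Prop :=
  fun ω => AgreeBefore n (Lc abar · ω) lbar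

/-- The counterfactual future from time `n` on under the static regime `ā`: all `L_s(ā)` and
`A_s(ā)` with `n ≤ s`, and `Y(ā)`. Times count from `0`, and `n = K` leaves `Y(ā)` alone. -/
def cfFuture (Lc : (Fin K → Fin 2) → Fin K → Ω → Lt) (Ac : (Fin K → Fin 2) → Fin K → Ω → Fin 2)
    (Yc : (Fin K → Fin 2) → Ω → ℝ) (abar : Fin K → Fin 2) (n : Fin (K + 1)) (ω : Ω) :
    ({s : Fin K // n ≤ s.castSucc} → Lt × Fin 2) × ℝ :=
  (fun s => (Lc abar s ω, Ac abar s ω), Yc abar ω)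

variable {L : Fin K → Ω → Lt} {A : Fin K → Ω → Fin 2} {Y : Ω → ℝ}
  {Lc : (Fin K → Fin 2) → Fin K → Ω → Lt} {Ac : (Fin K → Fin 2) → Fin K → Ω → Fin 2}
  {Yc : (Fin K → Fin 2) → Ω → ℝ} {lbar : Fin K → Lt} {abar : Fin K → Fin 2} {t : Fin K} {ω : Ω}

lemma exists_finset_covariates_mem [Finite Ω] (Lc : (Fin K → Fin 2) → Fin K → Ω → Lt) :
    ∃ s : Finset (Fin K → Lt), ∀ abar ω, (Lc abar · ω) ∈ s := by
  have hfin := Set.finite_range fun p : (Fin K → Fin 2) × Ω => (Lc p.1 · p.2)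
  exact ⟨hfin.toFinset, fun abar ω => hfin.mem_toFinset.2 ⟨(abar, ω), rfl⟩⟩

lemma histEvent_iff_obsPast :
    histEvent L A t lbar abar ω ↔ L t ω = lbar t ∧ obsPast L A lbar abar t.castSucc ω := by
  rw [histEvent, ← agreeBefore_succ, ← agreeBefore_castSucc, agreeBefore_succ_iff_and, and_assoc,
    obsPast]

lemma obsPast_succ :
    obsPast L A lbar abar t.succ ω ↔ A t ω = abar t ∧ histEvent L A t lbar abar ω := by
  rw [histEvent_iff_obsPast, obsPast, obsPast, agreeBefore_succ_iff_and, agreeBefore_succ_iff_and]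
  tauto

lemma cfCovariatePast_succ :
    cfCovariatePast Lc lbar abar t.succ ω ↔
      Lc abar t ω = lbar t ∧ cfCovariatePast Lc lbar abar t.castSucc ω :=
  agreeBefore_succ_iff_and

lemma cfFuture_eq_iff {n : Fin (K + 1)} {ω' : Ω} :
    cfFuture Lc Ac Yc abar n ω = cfFuture Lc Ac Yc abar n ω' ↔
      (∀ s : Fin K, n ≤ s.castSucc → Lc abar s ω = Lc abar s ω') ∧
        (∀ s : Fin K, n ≤ s.castSucc → Ac abar s ω = Ac abar s ω') ∧ Yc abar ω = Yc abar ω' := by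
  simp only [cfFuture, Prod.mk.injEq, funext_iff, Subtype.forall, forall_and, and_assoc]

lemma factorsThrough_outcome :
    (Yc abar).FactorsThrough (cfFuture Lc Ac Yc abar (Fin.last K)) :=
  fun _ _ h => (cfFuture_eq_iff.1 h).2.2

lemma factorsThrough_mul_treatment {F : Ω → ℝ}
    (hF : F.FactorsThrough (cfFuture Lc Ac Yc abar t.succ)) (v : Fin 2 → ℝ) :
    (fun ω => F ω * v (Ac abar t ω)).FactorsThrough (cfFuture Lc Ac Yc abar t.castSucc) := by
  intro ω ω' h
  obtain ⟨hL, hA, hY⟩ := cfFuture_eq_iff.1 h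
  have hle : ∀ s : Fin K, t.succ ≤ s.castSucc → t.castSucc ≤ s.castSucc := fun s hs =>
    Fin.castSucc_le_succ t |>.trans hs
  have hfuture : cfFuture Lc Ac Yc abar t.succ ω = cfFuture Lc Ac Yc abar t.succ ω' :=
    cfFuture_eq_iff.2 ⟨fun s hs => hL s (hle s hs), fun s hs => hA s (hle s hs), hY⟩
  simp only [hF hfuture, hA t le_rfl]

lemma factorsThrough_mul_covariate {F : Ω → ℝ}
    (hF : F.FactorsThrough (cfFuture Lc Ac Yc abar t.castSucc)) (v : Lt → ℝ) :
    (fun ω => F ω * v (Lc abar t ω)).FactorsThrough (cfFuture Lc Ac Yc abar t.castSucc) :=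
  fun ω ω' h => by simp only [hF h, (cfFuture_eq_iff.1 h).1 t le_rfl]

lemma cf_treatments_eq_iff (hcons : CfConsistent L A Y Lc Ac Yc) :
    (∀ s, s < t → Ac abar s ω = abar s) ↔ ∀ s, s < t → A s ω = abar s := by
  refine ⟨fun h s => ?_, fun h s hs => ?_⟩
  · induction s using WellFoundedLT.induction with
    | ind s ih =>
      intro hs
      rw [← h s hs, (hcons.1 abar s ω fun r hr => ih r hr (hr.trans hs)).2]
  · rw [← h s hs, (hcons.1 abar s ω fun r hr => h r (hr.trans hs)).2]

lemma cfHist_eq_histEvent (hcons : CfConsistent L A Y Lc Ac Yc) :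
    cfHist Lc Ac abar t lbar = histEvent L A t lbar abar := by
  ext ω
  rw [cfHist, histEvent, cf_treatments_eq_iff hcons]
  refine and_congr_left fun hA => forall₂_congr fun s hs => ?_
  rw [(hcons.1 abar s ω fun r hr => hA r (hr.trans_le hs)).1]

lemma cf_treatment_eq_of_histEvent (hcons : CfConsistent L A Y Lc Ac Yc)
    (hω : histEvent L A t lbar abar ω) : Ac abar t ω = A t ω :=
  (hcons.1 abar t ω hω.2).2

lemma cf_covariate_eq_of_obsPast (hcons : CfConsistent L A Y Lc Ac Yc)
    (hω : obsPast L A lbar abar t.castSucc ω) : Lc abar t ω = L t ω :=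
  (hcons.1 abar t ω (agreeBefore_castSucc.1 hω.2)).1

end Counterfactuals

section Weighting

variable {Ω Lt : Type} [Fintype Ω] {K : ℕ} {P : Ω → ℝ}
  {L : Fin K → Ω → Lt} {A : Fin K → Ω → Fin 2} {Y : Ω → ℝ}
  {Lc : (Fin K → Fin 2) → Fin K → Ω → Lt} {Ac : (Fin K → Fin 2) → Fin K → Ω → Fin 2}
  {Yc : (Fin K → Fin 2) → Ω → ℝ} {lbar : Fin K → Lt} {abar : Fin K → Fin 2} {t : Fin K}
  {F : Ω → ℝ}

lemma expecOn_treatment_and_histEvent (hP0 : ∀ ω, 0 ≤ P ω)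
    (hcons : CfConsistent L A Y Lc Ac Yc) (hB13 : B13 P Lc Ac Yc)
    (hF : F.FactorsThrough (cfFuture Lc Ac Yc abar t.succ)) (a : Fin 2) :
    expecOn P F (fun ω => A t ω = a ∧ histEvent L A t lbar abar ω) =
      cpr P (fun ω => A t ω = a) (histEvent L A t lbar abar) *
        expecOn P F (histEvent L A t lbar abar) := by
  refine expecOn_fiber_of_expecOn_fiber (b := abar t) hP0 ?_ a
  have hindep := expecOn_and_of_condIndep hP0 (Z := cfFuture Lc Ac Yc abar t.succ)
    (S := cfHist Lc Ac abar t lbar) (B := fun ω => Ac abar t ω = abar t)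
    (fun hpos ω₀ => by
      simpa only [cfFuture_eq_iff, Fin.succ_le_castSucc_iff] using
        hB13 t abar lbar hpos (Lc abar · ω₀) (Ac abar · ω₀) (Yc abar ω₀)) hF
  have hobs : ∀ ω, histEvent L A t lbar abar ω → (A t ω = abar t ↔ Ac abar t ω = abar t) :=
    fun ω hω => by rw [cf_treatment_eq_of_histEvent hcons hω]
  rw [cfHist_eq_histEvent hcons] at hindep
  rw [cpr_congr hobs, ← hindep]
  exact expecOn_congr (fun ω => and_congr_left (hobs ω)) fun _ _ => rfl

lemma expecOn_mul_treatment_histEvent (hP0 : ∀ ω, 0 ≤ P ω)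
    (hcons : CfConsistent L A Y Lc Ac Yc) (hB13 : B13 P Lc Ac Yc)
    (hF : F.FactorsThrough (cfFuture Lc Ac Yc abar t.succ)) (v : Fin 2 → ℝ) :
    expecOn P (fun ω => F ω * v (Ac abar t ω)) (histEvent L A t lbar abar) =
      (∑ a, v a * cpr P (fun ω => A t ω = a) (histEvent L A t lbar abar)) *
        expecOn P F (histEvent L A t lbar abar) := by
  rw [← expecOn_mul_comp (expecOn_treatment_and_histEvent hP0 hcons hB13 hF)]
  exact expecOn_congr (fun _ => Iff.rfl) fun ω hω => by
    rw [cf_treatment_eq_of_histEvent hcons hω]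

/-- The weights `w_t(A_t)` have conditional mean `q_t(ā_t | l̄_t, ā_{t-1})` given each non-null
observed history of the path `(l̄, ā)`. -/
def HasCondMean (P : Ω → ℝ) (L : Fin K → Ω → Lt) (A : Fin K → Ω → Fin 2)
    (q : Fin K → (Fin K → Lt) → (Fin K → Fin 2) → Fin 2 → ℝ) (lbar : Fin K → Lt)
    (abar : Fin K → Fin 2) (w : Fin K → Fin 2 → ℝ) : Prop :=
  ∀ t, 0 < pr P (histEvent L A t lbar abar) →
    ∑ a, w t a * cpr P (fun ω => A t ω = a) (histEvent L A t lbar abar) = q t lbar abar (abar t)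

/-- The inverse-probability weight `q_t(ā_t | l̄_t, ā_{t-1}) / P(A_t = ā_t | l̄_t, ā_{t-1})`; it is
`0` where the propensity in the denominator vanishes. -/
def ipWeight (P : Ω → ℝ) (L : Fin K → Ω → Lt) (A : Fin K → Ω → Fin 2)
    (q : Fin K → (Fin K → Lt) → (Fin K → Fin 2) → Fin 2 → ℝ) (lbar : Fin K → Lt)
    (abar : Fin K → Fin 2) (t : Fin K) : ℝ :=
  q t lbar abar (abar t) / cpr P (fun ω => A t ω = abar t) (histEvent L A t lbar abar)

variable {q : Fin K → (Fin K → Lt) → (Fin K → Fin 2) → Fin 2 → ℝ} {w : Fin K → Fin 2 → ℝ}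

lemma hasCondMean_const :
    HasCondMean P L A q lbar abar (fun t _ => q t lbar abar (abar t)) := fun t ht => by
  rw [← Finset.mul_sum, sum_cpr_eq_one (A t) ht.ne', mul_one]

lemma kernel_mul_expecOn_histEvent (hP0 : ∀ ω, 0 ≤ P ω) (hcons : CfConsistent L A Y Lc Ac Yc)
    (hB13 : B13 P Lc Ac Yc) (hq : ∀ t l a b, 0 ≤ q t l a b) (hB12 : B12 P L A q)
    (hF : F.FactorsThrough (cfFuture Lc Ac Yc abar t.succ)) :
    q t lbar abar (abar t) * expecOn P F (histEvent L A t lbar abar) =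
      ipWeight P L A q lbar abar t * expecOn P F (obsPast L A lbar abar t.succ) := by
  rw [expecOn_congr (fun ω => obsPast_succ) fun _ _ => rfl,
    expecOn_treatment_and_histEvent hP0 hcons hB13 hF, ipWeight, ← mul_assoc]
  rcases (pr_nonneg hP0 (histEvent L A t lbar abar)).eq_or_lt with hnull | hpos
  · rw [expecOn_eq_zero_of_imp hP0 hnull.symm fun _ h => h, mul_zero, mul_zero]
  rw [div_mul_cancel_of_imp]
  contrapose!
  exact fun hne => (hB12 t lbar abar hpos _ ((hq _ _ _ _).lt_of_ne' hne)).ne'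

lemma expecOn_mul_cfCovariatePast_succ (hcons : CfConsistent L A Y Lc Ac Yc) {W : Ω → ℝ} {c : ℝ}
    (hpast : ∀ F : Ω → ℝ, F.FactorsThrough (cfFuture Lc Ac Yc abar t.castSucc) →
      expecOn P (fun ω => F ω * W ω) (cfCovariatePast Lc lbar abar t.castSucc) =
        c * expecOn P F (obsPast L A lbar abar t.castSucc))
    (hF : F.FactorsThrough (cfFuture Lc Ac Yc abar t.castSucc)) :
    expecOn P (fun ω => F ω * W ω) (cfCovariatePast Lc lbar abar t.succ) =
      c * expecOn P F (histEvent L A t lbar abar) := by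
  have h := hpast _ (factorsThrough_mul_covariate hF fun l => if l = lbar t then 1 else 0)
  simp only [mul_right_comm _ _ (W _)] at h
  rw [expecOn_mul_indicator, expecOn_mul_indicator] at h
  rw [expecOn_congr (fun ω => cfCovariatePast_succ) fun _ _ => rfl]
  refine h.trans (congrArg (c * ·) (expecOn_congr (fun ω => ?_) fun _ _ => rfl))
  rw [histEvent_iff_obsPast]
  exact and_congr_left fun hω => by rw [cf_covariate_eq_of_obsPast hcons hω]

theorem expecOn_mul_partialProd_cfCovariatePast (hP0 : ∀ ω, 0 ≤ P ω)
    (hcons : CfConsistent L A Y Lc Ac Yc) (hB13 : B13 P Lc Ac Yc)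
    (hq : ∀ t l a b, 0 ≤ q t l a b) (hB12 : B12 P L A q) (hw : HasCondMean P L A q lbar abar w)
    (n : Fin (K + 1)) (F : Ω → ℝ) (hF : F.FactorsThrough (cfFuture Lc Ac Yc abar n)) :
    expecOn P (fun ω => F ω * Fin.partialProd (fun s => w s (Ac abar s ω)) n)
        (cfCovariatePast Lc lbar abar n) =
      Fin.partialProd (ipWeight P L A q lbar abar) n *
        expecOn P F (obsPast L A lbar abar n) := by
  induction n using Fin.induction generalizing F with
  | zero =>
    simp only [Fin.partialProd_zero, mul_one, one_mul]
    exact expecOn_congr (fun ω => iff_of_true agreeBefore_zero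
      ⟨agreeBefore_zero, agreeBefore_zero⟩) fun _ _ => rfl
  | succ t ih =>
    have hmean : (∑ a, w t a * cpr P (fun ω => A t ω = a) (histEvent L A t lbar abar)) *
        expecOn P F (histEvent L A t lbar abar) =
        q t lbar abar (abar t) * expecOn P F (histEvent L A t lbar abar) := by
      rcases (pr_nonneg hP0 (histEvent L A t lbar abar)).eq_or_lt with hnull | hpos
      · rw [expecOn_eq_zero_of_imp hP0 hnull.symm fun _ h => h, mul_zero, mul_zero]
      · rw [hw t hpos]
    simp only [Fin.partialProd_succ, ← mul_assoc, mul_right_comm (F _)]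
    rw [expecOn_mul_cfCovariatePast_succ hcons ih (factorsThrough_mul_treatment hF (w t)),
      expecOn_mul_treatment_histEvent hP0 hcons hB13 hF, hmean,
      kernel_mul_expecOn_histEvent hP0 hcons hB13 hq hB12 hF, mul_assoc]

lemma expecOn_mul_partialProd_cfCovariatePast_succ (hP0 : ∀ ω, 0 ≤ P ω)
    (hcons : CfConsistent L A Y Lc Ac Yc) (hB13 : B13 P Lc Ac Yc)
    (hq : ∀ t l a b, 0 ≤ q t l a b) (hB12 : B12 P L A q) (hw : HasCondMean P L A q lbar abar w)
    (hF : F.FactorsThrough (cfFuture Lc Ac Yc abar t.succ)) (v : Fin 2 → ℝ) :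
    expecOn P (fun ω => F ω * v (Ac abar t ω) *
        Fin.partialProd (fun s => w s (Ac abar s ω)) t.castSucc)
        (cfCovariatePast Lc lbar abar t.succ) =
      (∑ a, v a * cpr P (fun ω => A t ω = a) (histEvent L A t lbar abar)) *
        expecOn P (fun ω => F ω * Fin.partialProd (fun s => w s (Ac abar s ω)) t.castSucc)
          (cfCovariatePast Lc lbar abar t.succ) := by
  have hpast := expecOn_mul_partialProd_cfCovariatePast hP0 hcons hB13 hq hB12 hw t.castSucc
  have hF' : F.FactorsThrough (cfFuture Lc Ac Yc abar t.castSucc) := by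
    simpa only [mul_one] using factorsThrough_mul_treatment hF fun _ => 1
  rw [expecOn_mul_cfCovariatePast_succ hcons hpast (factorsThrough_mul_treatment hF v),
    expecOn_mul_cfCovariatePast_succ hcons hpast hF',
    expecOn_mul_treatment_histEvent hP0 hcons hB13 hF, mul_left_comm]

lemma prod_kernel_mul_expecOn_outcome (hP0 : ∀ ω, 0 ≤ P ω) (hcons : CfConsistent L A Y Lc Ac Yc)
    (hB13 : B13 P Lc Ac Yc) (hq : ∀ t l a b, 0 ≤ q t l a b) (hB12 : B12 P L A q) :
    (∏ s, q s lbar abar (abar s)) *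
        expecOn P (Yc abar) (cfCovariatePast Lc lbar abar (Fin.last K)) =
      (∏ s, ipWeight P L A q lbar abar s) *
        expecOn P (Yc abar) (obsPast L A lbar abar (Fin.last K)) := by
  have h := expecOn_mul_partialProd_cfCovariatePast hP0 hcons hB13 hq hB12
    (hasCondMean_const (lbar := lbar)) (Fin.last K) (Yc abar) factorsThrough_outcome
  simpa only [partialProd_last, expecOn_mul_const] using h

end Weighting

section GFormula

variable {Ω Lt : Type} [Fintype Ω] {K : ℕ} {P : Ω → ℝ}
  {L : Fin K → Ω → Lt} {A : Fin K → Ω → Fin 2} {Y : Ω → ℝ}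
  {Lc : (Fin K → Fin 2) → Fin K → Ω → Lt} {Ac : (Fin K → Fin 2) → Fin K → Ω → Fin 2}
  {Yc : (Fin K → Fin 2) → Ω → ℝ} {q : Fin K → (Fin K → Lt) → (Fin K → Fin 2) → Fin 2 → ℝ}

lemma stochMean_eq_sum {s : Finset (Fin K → Lt)} (hs : ∀ abar ω, (Lc abar · ω) ∈ s) :
    stochMean P Lc Yc q = ∑ lbar ∈ s, ∑ abar : Fin K → Fin 2,
      (∏ t, q t lbar abar (abar t)) *
        expecOn P (Yc abar) (cfCovariatePast Lc lbar abar (Fin.last K)) := by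
  rw [stochMean, Finset.sum_comm]
  refine Finset.sum_congr rfl fun abar _ => ?_
  rw [expec_eq_sum_fiber P _ (fun ω s => Lc abar s ω) (hs abar)]
  refine Finset.sum_congr rfl fun lbar _ => ?_
  rw [← expecOn_mul_const]
  exact expecOn_congr (fun ω => agreeBefore_last.symm) fun ω hω => by rw [hω]

lemma pr_obsPast (hP0 : ∀ ω, 0 ≤ P ω) (hP1 : ∑ ω, P ω = 1) (lbar : Fin K → Lt)
    (abar : Fin K → Fin 2) (n : Fin (K + 1)) :
    pr P (obsPast L A lbar abar n) =
      Fin.partialProd (fun j => cpr P (fun ω => L j ω = lbar j)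
          (obsPast L A lbar abar j.castSucc)) n *
        Fin.partialProd (fun j => cpr P (fun ω => A j ω = abar j)
          (histEvent L A j lbar abar)) n := by
  induction n using Fin.induction with
  | zero =>
    have hsure : ∀ ω, obsPast L A lbar abar 0 ω := fun _ => ⟨agreeBefore_zero, agreeBefore_zero⟩
    simp only [pr, hsure, if_true, hP1, Fin.partialProd_zero, mul_one]
  | succ t ih =>
    rw [pr_congr fun ω => obsPast_succ, ← cpr_mul_pr hP0, pr_congr fun ω => histEvent_iff_obsPast,
      ← cpr_mul_pr hP0, ih, Fin.partialProd_succ, Fin.partialProd_succ]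
    ring

lemma prod_ipWeight_mul_expecOn_obsPast (hP0 : ∀ ω, 0 ≤ P ω) (hP1 : ∑ ω, P ω = 1)
    (lbar : Fin K → Lt) (abar : Fin K → Fin 2) :
    (∏ t, ipWeight P L A q lbar abar t) * expecOn P Y (obsPast L A lbar abar (Fin.last K)) =
      cexp P Y (obsPast L A lbar abar (Fin.last K)) *
        (∏ j, cpr P (fun ω => L j ω = lbar j) (obsPast L A lbar abar j.castSucc)) *
        ∏ t, q t lbar abar (abar t) := by
  have hchain := pr_obsPast (L := L) (A := A) hP0 hP1 lbar abar (Fin.last K)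
  simp only [partialProd_last] at hchain
  rw [← cexp_mul_pr hP0]
  by_cases hnull : pr P (obsPast L A lbar abar (Fin.last K)) = 0
  · rw [cexp, hnull, div_zero, mul_zero, mul_zero, zero_mul, zero_mul]
  have hprop : ∏ j, cpr P (fun ω => A j ω = abar j) (histEvent L A j lbar abar) ≠ 0 :=
    right_ne_zero_of_mul (hchain ▸ hnull)
  simp only [hchain, ipWeight, Finset.prod_div_distrib]
  field_simp

theorem stochMean_eq_gform [Fintype Lt] (hP0 : ∀ ω, 0 ≤ P ω) (hP1 : ∑ ω, P ω = 1)
    (hcons : CfConsistent L A Y Lc Ac Yc) (hB13 : B13 P Lc Ac Yc)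
    (hq : ∀ t l a b, 0 ≤ q t l a b) (hB12 : B12 P L A q) :
    stochMean P Lc Yc q = gform P L A Y q := by
  rw [stochMean_eq_sum fun _ _ => Finset.mem_univ _, gform]
  refine Finset.sum_congr rfl fun lbar _ => Finset.sum_congr rfl fun abar _ => ?_
  have hlast : (fun ω => (∀ s, L s ω = lbar s) ∧ ∀ s, A s ω = abar s) =
      obsPast L A lbar abar (Fin.last K) := by
    ext ω
    simp only [obsPast, agreeBefore_last, funext_iff]
  have hpast : ∀ j : Fin K,
      (fun ω => (∀ s, s < j → L s ω = lbar s) ∧ ∀ s, s < j → A s ω = abar s) =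
        obsPast L A lbar abar j.castSucc := fun j => by
    ext ω
    simp only [obsPast, agreeBefore_castSucc]
  have hY : ∀ ω, obsPast L A lbar abar (Fin.last K) ω → Yc abar ω = Y ω := fun ω hω =>
    hcons.2 abar ω (congrFun (agreeBefore_last.1 hω.2))
  simp only [hlast, hpast]
  rw [prod_kernel_mul_expecOn_outcome hP0 hcons hB13 hq hB12,
    expecOn_congr (fun _ => Iff.rfl) hY, prod_ipWeight_mul_expecOn_obsPast hP0 hP1]

end GFormula

section ModifiedTreatmentPolicy

/-- The event `{L̄_t(Ā⁺_{t-1}) = l̄_t, Ā⁺_{t-1} = ā_{t-1}}` conditioned on in `qMTPcf`: the history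
of the MTP process `Ā⁺` follows the path `(l̄, ā)`. -/
def mtpHist {Ω Lt : Type} {K : ℕ} (Lc : (Fin K → Fin 2) → Fin K → Ω → Lt) (Ap : Fin K → Ω → Fin 2)
    (t : Fin K) (lbar : Fin K → Lt) (abar : Fin K → Fin 2) : Ω → Prop :=
  fun ω => (∀ s, s ≤ t → Lc (fun s' => Ap s' ω) s ω = lbar s) ∧ ∀ s, s < t → Ap s ω = abar s

/-- The indicator of `g_t(a, l̄_t, ā_{t-1}) = ā_t`: whether the policy turns the natural treatment
value `a` into the treatment prescribed by the path `(l̄, ā)`. -/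
def mtpWeight {Lt : Type} {K : ℕ} (g : Fin K → Fin 2 → (Fin K → Lt) → (Fin K → Fin 2) → Fin 2)
    (lbar : Fin K → Lt) (abar : Fin K → Fin 2) (t : Fin K) (a : Fin 2) : ℝ :=
  if g t a lbar abar = abar t then 1 else 0

section Pathwise

variable {Ω Lt : Type} {K : ℕ} {Lc : (Fin K → Fin 2) → Fin K → Ω → Lt}
  {Ac : (Fin K → Fin 2) → Fin K → Ω → Fin 2}
  {g : Fin K → Fin 2 → (Fin K → Lt) → (Fin K → Fin 2) → Fin 2} {Ap : Fin K → Ω → Fin 2}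
  {lbar : Fin K → Lt} {abar : Fin K → Fin 2} {t : Fin K} {n : Fin (K + 1)} {ω : Ω}

lemma mtpHist_iff (hcfpre : CfPrefixDep Lc Ac) :
    mtpHist Lc Ap t lbar abar ω ↔
      AgreeBefore t.castSucc (Ap · ω) abar ∧ cfCovariatePast Lc lbar abar t.succ ω := by
  rw [mtpHist, cfCovariatePast, agreeBefore_succ, agreeBefore_castSucc, and_comm]
  refine and_congr_right fun hA => forall₂_congr fun s hs => ?_
  rw [(hcfpre _ abar s fun r hr => hA r (hr.trans_le hs)).1]

lemma mtp_treatment_eq (hcfpre : CfPrefixDep Lc Ac) (hg : PolPrefixDep g)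
    (hAp : IsMTPProcess Lc Ac g Ap) (hA : AgreeBefore t.castSucc (Ap · ω) abar)
    (hL : cfCovariatePast Lc lbar abar t.succ ω) :
    Ap t ω = g t (Ac abar t ω) lbar abar := by
  have hhist := (mtpHist_iff hcfpre).2 ⟨hA, hL⟩
  rw [hAp t ω, (hcfpre _ abar t hhist.2).2]
  exact hg t _ _ _ _ _ hhist.1 hhist.2

lemma partialProd_mtpWeight (hcfpre : CfPrefixDep Lc Ac) (hg : PolPrefixDep g)
    (hAp : IsMTPProcess Lc Ac g Ap) (hL : cfCovariatePast Lc lbar abar n ω) :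
    Fin.partialProd (fun s => mtpWeight g lbar abar s (Ac abar s ω)) n =
      if AgreeBefore n (Ap · ω) abar then 1 else 0 := by
  induction n using Fin.induction with
  | zero => rw [Fin.partialProd_zero, if_pos agreeBefore_zero]
  | succ t ih =>
    rw [Fin.partialProd_succ, ih (cfCovariatePast_succ.1 hL).2, agreeBefore_succ_iff_and, mtpWeight]
    by_cases hA : AgreeBefore t.castSucc (Ap · ω) abar
    · rw [if_pos hA, one_mul, mtp_treatment_eq hcfpre hg hAp hA hL]
      simp only [hA, and_true]
    · rw [if_neg hA, zero_mul, if_neg fun h => hA h.2]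

end Pathwise

variable {Ω Lt : Type} [Fintype Ω] {K : ℕ} {P : Ω → ℝ}
  {L : Fin K → Ω → Lt} {A : Fin K → Ω → Fin 2} {Y : Ω → ℝ}
  {Lc : (Fin K → Fin 2) → Fin K → Ω → Lt} {Ac : (Fin K → Fin 2) → Fin K → Ω → Fin 2}
  {Yc : (Fin K → Fin 2) → Ω → ℝ}
  {g : Fin K → Fin 2 → (Fin K → Lt) → (Fin K → Fin 2) → Fin 2} {Ap : Fin K → Ω → Fin 2}
  {lbar : Fin K → Lt} {abar : Fin K → Fin 2} {t : Fin K}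

lemma qMTP_nonneg (hP0 : ∀ ω, 0 ≤ P ω) (t : Fin K) (lbar : Fin K → Lt) (abar : Fin K → Fin 2)
    (a : Fin 2) : 0 ≤ qMTP P L A g t lbar abar a :=
  Finset.sum_nonneg fun _ _ => ite_nonneg (cpr_nonneg hP0 _ _) le_rfl

lemma sum_indicator_mul_cpr_eq_qMTP (a : Fin 2) :
    ∑ b, (if g t b lbar abar = a then 1 else 0) *
        cpr P (fun ω => A t ω = b) (histEvent L A t lbar abar) = qMTP P L A g t lbar abar a := by
  simp only [ite_mul, one_mul, zero_mul, qMTP]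

lemma hasCondMean_mtpWeight :
    HasCondMean P L A (qMTP P L A g) lbar abar (mtpWeight g lbar abar) :=
  fun _ _ => sum_indicator_mul_cpr_eq_qMTP _

lemma expecOn_mul_partialProd_mtpWeight (hcfpre : CfPrefixDep Lc Ac) (hg : PolPrefixDep g)
    (hAp : IsMTPProcess Lc Ac g Ap) {m n : Fin (K + 1)} (hmn : m ≤ n) (F : Ω → ℝ) :
    expecOn P (fun ω => F ω * Fin.partialProd (fun s => mtpWeight g lbar abar s (Ac abar s ω)) m)
        (cfCovariatePast Lc lbar abar n) =
      expecOn P F (fun ω => AgreeBefore m (Ap · ω) abar ∧ cfCovariatePast Lc lbar abar n ω) := by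
  rw [← expecOn_mul_indicator]
  refine expecOn_congr (fun _ => Iff.rfl) fun ω hω => ?_
  rw [partialProd_mtpWeight hcfpre hg hAp fun s hs => hω s (hs.trans_le hmn)]

theorem qMTPcf_eq_qMTP (hP0 : ∀ ω, 0 ≤ P ω) (hcfpre : CfPrefixDep Lc Ac)
    (hcons : CfConsistent L A Y Lc Ac Yc) (hg : PolPrefixDep g) (hAp : IsMTPProcess Lc Ac g Ap)
    (hB12 : B12 P L A (qMTP P L A g)) (hB13 : B13 P Lc Ac Yc)
    (hpos : 0 < pr P (mtpHist Lc Ap t lbar abar)) (a : Fin 2) :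
    qMTPcf P Lc Ac g Ap t lbar abar a = qMTP P L A g t lbar abar a := by
  have hone : (fun _ : Ω => (1 : ℝ)).FactorsThrough (cfFuture Lc Ac Yc abar t.succ) :=
    fun _ _ _ => rfl
  have hmean := expecOn_mul_partialProd_cfCovariatePast_succ (lbar := lbar) hP0 hcons hB13
    (qMTP_nonneg hP0) hB12 hasCondMean_mtpWeight hone fun b => if g t b lbar abar = a then 1 else 0
  rw [expecOn_mul_partialProd_mtpWeight hcfpre hg hAp (Fin.castSucc_le_succ t),
    expecOn_mul_partialProd_mtpWeight hcfpre hg hAp (Fin.castSucc_le_succ t),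
    expecOn_mul_indicator P (fun _ => 1), expecOn_one, expecOn_one,
    sum_indicator_mul_cpr_eq_qMTP] at hmean
  simp only [← mtpHist_iff hcfpre] at hmean
  change cpr P _ (mtpHist Lc Ap t lbar abar) = _
  rw [cpr, div_eq_iff hpos.ne', ← hmean]
  exact pr_congr fun ω => and_congr_left fun hω => by rw [(hcfpre _ abar t hω.2).2]

lemma prod_qMTP_mul_expecOn_outcome (hP0 : ∀ ω, 0 ≤ P ω) (hcfpre : CfPrefixDep Lc Ac)
    (hcons : CfConsistent L A Y Lc Ac Yc) (hg : PolPrefixDep g) (hAp : IsMTPProcess Lc Ac g Ap)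
    (hB12 : B12 P L A (qMTP P L A g)) (hB13 : B13 P Lc Ac Yc) :
    (∏ t, qMTP P L A g t lbar abar (abar t)) *
        expecOn P (Yc abar) (cfCovariatePast Lc lbar abar (Fin.last K)) =
      expecOn P (Yc abar) (fun ω => AgreeBefore (Fin.last K) (Ap · ω) abar ∧
        cfCovariatePast Lc lbar abar (Fin.last K) ω) := by
  have hq := qMTP_nonneg (L := L) (A := A) (g := g) hP0
  rw [prod_kernel_mul_expecOn_outcome hP0 hcons hB13 hq hB12, ← partialProd_last,
    ← expecOn_mul_partialProd_mtpWeight hcfpre hg hAp le_rfl]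
  exact (expecOn_mul_partialProd_cfCovariatePast hP0 hcons hB13 hq hB12 hasCondMean_mtpWeight
    (Fin.last K) (Yc abar) factorsThrough_outcome).symm

lemma expec_outcome_mtp_eq_sum {s : Finset (Fin K → Lt)} (hs : ∀ abar ω, (Lc abar · ω) ∈ s) :
    expec P (fun ω => Yc (fun s => Ap s ω) ω) =
      ∑ lbar ∈ s, ∑ abar : Fin K → Fin 2,
        expecOn P (Yc abar) (fun ω => AgreeBefore (Fin.last K) (Ap · ω) abar ∧
          cfCovariatePast Lc lbar abar (Fin.last K) ω) := by
  rw [expec_eq_sum_fiber P _ (fun ω s => Ap s ω) fun _ => Finset.mem_univ _, Finset.sum_comm]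
  refine Finset.sum_congr rfl fun abar _ => ?_
  rw [expecOn_eq_sum_fiber P _ _ (fun ω s => Lc abar s ω) (hs abar)]
  refine Finset.sum_congr rfl fun lbar _ => expecOn_congr (fun ω => ?_) fun ω hω => by rw [hω.2]
  rw [cfCovariatePast, agreeBefore_last, agreeBefore_last, and_comm]

theorem expec_outcome_mtp_eq_stochMean (hP0 : ∀ ω, 0 ≤ P ω)
    (hcfpre : CfPrefixDep Lc Ac) (hcons : CfConsistent L A Y Lc Ac Yc) (hg : PolPrefixDep g)
    (hAp : IsMTPProcess Lc Ac g Ap) (hB12 : B12 P L A (qMTP P L A g)) (hB13 : B13 P Lc Ac Yc) :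
    expec P (fun ω => Yc (fun s => Ap s ω) ω) = stochMean P Lc Yc (qMTP P L A g) := by
  obtain ⟨s, hs⟩ := exists_finset_covariates_mem Lc
  rw [expec_outcome_mtp_eq_sum hs, stochMean_eq_sum hs]
  simp only [prod_qMTP_mul_expecOn_outcome hP0 hcfpre hcons hg hAp hB12 hB13]

theorem stochMean_qMTPcf_eq_stochMean_qMTP (hP0 : ∀ ω, 0 ≤ P ω)
    (hcfpre : CfPrefixDep Lc Ac) (hcons : CfConsistent L A Y Lc Ac Yc) (hg : PolPrefixDep g)
    (hAp : IsMTPProcess Lc Ac g Ap) (hB12 : B12 P L A (qMTP P L A g)) (hB13 : B13 P Lc Ac Yc) :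
    stochMean P Lc Yc (qMTPcf P Lc Ac g Ap) = stochMean P Lc Yc (qMTP P L A g) := by
  obtain ⟨s, hs⟩ := exists_finset_covariates_mem Lc
  rw [stochMean_eq_sum hs, stochMean_eq_sum hs]
  refine Finset.sum_congr rfl fun lbar _ => Finset.sum_congr rfl fun abar _ => ?_
  by_cases hpos : ∀ t, 0 < pr P (mtpHist Lc Ap t lbar abar)
  · simp only [qMTPcf_eq_qMTP hP0 hcfpre hcons hg hAp hB12 hB13 (hpos _)]
  obtain ⟨t, ht⟩ := not_forall.1 hpos
  have hnull : pr P (mtpHist Lc Ap t lbar abar) = 0 := (not_lt.1 ht).antisymm (pr_nonneg hP0 _)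
  have hcf : qMTPcf P Lc Ac g Ap t lbar abar (abar t) = 0 := by
    change _ / pr P (mtpHist Lc Ap t lbar abar) = 0
    rw [hnull, div_zero]
  have himp : ∀ ω, AgreeBefore (Fin.last K) (Ap · ω) abar ∧
      cfCovariatePast Lc lbar abar (Fin.last K) ω → mtpHist Lc Ap t lbar abar ω := fun ω hω =>
    (mtpHist_iff hcfpre).2
      ⟨fun s _ => hω.1 s s.castSucc_lt_last, fun s _ => hω.2 s s.castSucc_lt_last⟩
  rw [Finset.prod_eq_zero (Finset.mem_univ t) hcf, zero_mul,
    prod_qMTP_mul_expecOn_outcome hP0 hcfpre hcons hg hAp hB12 hB13,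
    expecOn_eq_zero_of_imp hP0 hnull himp]

end ModifiedTreatmentPolicy

/-- Three-way concordance under model `M2`: for any MTP `g` whose
induced kernels `q̃^g` satisfy positivity B1.2, under consistency and B1.3 the
counterfactual kernels `q^{g,cf}` coincide with `q̃^g` on all histories of positive
probability, and consequently
`E[Y^g] = E[Y^{g,cf}] = E[Y^{q̃^g}] = Ψ_{q̃^g}(P)`: the MTP mean `γ_MTP`, its
g1-stochastic analogue `γ_MTP-SI^{g1}`, and the stochastic-regime mean `γ_MTP-SI`
are all equal and all identified by the same g-formula. -/
theorem mtp_three_way_concordance_M2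
    (K : ℕ) (hK : 1 ≤ K) (Ω Lt : Type) [Fintype Ω] [Fintype Lt]
    (P : Ω → ℝ) (hP0 : ∀ ω, 0 ≤ P ω) (hP1 : (∑ ω, P ω) = 1)
    (L : Fin K → Ω → Lt) (A : Fin K → Ω → Fin 2) (Y : Ω → ℝ)
    (Lc : (Fin K → Fin 2) → Fin K → Ω → Lt)
    (Ac : (Fin K → Fin 2) → Fin K → Ω → Fin 2)
    (Yc : (Fin K → Fin 2) → Ω → ℝ)
    (hcfpre : CfPrefixDep Lc Ac)
    (hcons : CfConsistent L A Y Lc Ac Yc)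
    (g : Fin K → Fin 2 → (Fin K → Lt) → (Fin K → Fin 2) → Fin 2)
    (hg : PolPrefixDep g)
    (Ap : Fin K → Ω → Fin 2) (hAp : IsMTPProcess Lc Ac g Ap)
    (hB12 : B12 P L A (qMTP P L A g))
    (hB13 : B13 P Lc Ac Yc) :
    (∀ (t : Fin K) (lbar : Fin K → Lt) (abar : Fin K → Fin 2),
        0 < pr P (fun ω => (∀ s, s ≤ t → Lc (fun s' => Ap s' ω) s ω = lbar s) ∧
            (∀ s, s < t → Ap s ω = abar s)) →
        ∀ aplus : Fin 2,
          qMTPcf P Lc Ac g Ap t lbar abar aplus = qMTP P L A g t lbar abar aplus)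
    ∧ expec P (fun ω => Yc (fun s => Ap s ω) ω)
        = stochMean P Lc Yc (qMTPcf P Lc Ac g Ap)
    ∧ stochMean P Lc Yc (qMTPcf P Lc Ac g Ap) = stochMean P Lc Yc (qMTP P L A g)
    ∧ stochMean P Lc Yc (qMTP P L A g) = gform P L A Y (qMTP P L A g) := by
  have hmtp := expec_outcome_mtp_eq_stochMean hP0 hcfpre hcons hg hAp hB12 hB13
  have hcf := stochMean_qMTPcf_eq_stochMean_qMTP hP0 hcfpre hcons hg hAp hB12 hB13
  have hident := stochMean_eq_gform hP0 hP1 hcons hB13 (qMTP_nonneg hP0) hB12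
  exact ⟨fun t lbar abar hpos aplus =>
    qMTPcf_eq_qMTP hP0 hcfpre hcons hg hAp hB12 hB13 hpos aplus, hmtp.trans hcf.symm, hcf, hident⟩
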